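/- (Contraction Lemma) Given q > 1, if g ∈ B_q satisfies ĝ(0) = ĝ′(0) = 0, then there is a constant C = C(d,p,q) > 0, independent of L, n and g, such that ‖R⁰_{L,n} g‖ ≤ (C/L^{(p+1)/d}) ‖g‖ for all L > L₁ and all integers n ≥ 0. -/

import Mathlib

open MeasureTheory Filter Topology

noncomputable section

/-- Fourier transform, convention `f̂ ω = ∫ e^{-iωx} f x dx`. -/
def FT (f : ℝ → ℂ) (ω : ℝ) : ℂ :=
  ∫ x : ℝ, Complex.exp (-(Complex.I * ω * x)) * f x

/-- Fourier transform of a real-valued function. -/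
def FTr (f : ℝ → ℝ) : ℝ → ℂ := FT fun x => (f x : ℂ)

/-- The quantity whose supremum over `ω` defines the `B_q` norm. -/
def bqFun (q : ℝ) (f : ℝ → ℂ) (ω : ℝ) : ℝ :=
  (1 + |ω| ^ q) * (‖FT f ω‖ + ‖deriv (FT f) ω‖ + ‖deriv (deriv (FT f)) ω‖)

/-- The `B_q` norm `‖f‖ = sup_ω (1+|ω|^q)(|f̂(ω)|+|f̂′(ω)|+|f̂″(ω)|)`. -/
def bqNorm (q : ℝ) (f : ℝ → ℂ) : ℝ := ⨆ ω : ℝ, bqFun q f ω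

/-- The `B_q` norm of a real-valued function. -/
def bqNormR (q : ℝ) (f : ℝ → ℝ) : ℝ := bqNorm q fun x => (f x : ℂ)

/-- Membership in the space `B_q`: `f ∈ L¹`, `f̂ ∈ C²`, finite `B_q` norm. -/
def MemBq (q : ℝ) (f : ℝ → ℂ) : Prop :=
  Integrable f ∧ ContDiff ℝ 2 (FT f) ∧ BddAbove (Set.range (bqFun q f))

/-- Membership in `B_q` for a real-valued function. -/
def MemBqR (q : ℝ) (f : ℝ → ℝ) : Prop := MemBq q fun x => (f x : ℂ)

/-- Condition (G1): there is an integer `M > 0` such that `G(·,1) ∈ C^{q+2}` with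
polynomial decay of all derivatives up to order `q+2`. -/
def CondG1 (G : ℝ → ℝ → ℝ) (q : ℕ) : Prop :=
  ∃ M : ℕ, 0 < M ∧ ContDiff ℝ (q + 2 : ℕ) (fun x => G x 1) ∧
    ∀ j ≤ q + 2, ∃ B : ℝ, ∀ x : ℝ,
      (1 + |x| + x ^ 2) * (1 + |x|) ^ (M + 1) *
        |iteratedDeriv j (fun y => G y 1) x| ≤ B

/-- Condition (G2): scaling `G(x,t) = t^{-1/d} G(t^{-1/d}x, 1)`. -/
def CondG2 (G : ℝ → ℝ → ℝ) (d : ℝ) : Prop :=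
  ∀ x t : ℝ, 0 < t →
    G x t = t ^ (-(1 : ℝ) / d) * G (t ^ (-(1 : ℝ) / d) * x) 1

/-- Condition (G3): the semigroup (convolution) property. -/
def CondG3 (G : ℝ → ℝ → ℝ) : Prop :=
  ∀ x t τ : ℝ, 0 < τ → τ < t → G x t = ∫ y : ℝ, G (x - y) (t - τ) * G y τ

/-- Conditions (G). -/
def CondsG (G : ℝ → ℝ → ℝ) (q : ℕ) (d : ℝ) : Prop :=
  CondG1 G q ∧ CondG2 G d ∧ CondG3 G

/-- Hypotheses on the coefficient `c`: positive, locally integrable on `(1,∞)`,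
and `c(t) = t^p + o(t^p)` as `t → ∞`. -/
def CondC (c : ℝ → ℝ) (p : ℝ) : Prop :=
  0 < p ∧ (∀ t : ℝ, 1 < t → 0 < c t) ∧
    LocallyIntegrableOn c (Set.Ioi 1) ∧
    (fun t => c t - t ^ p) =o[atTop] fun t => t ^ p

/-- `s(t) = ∫₁ᵗ c(τ) dτ`. -/
def sF (c : ℝ → ℝ) (t : ℝ) : ℝ := ∫ τ in (1:ℝ)..t, c τ

/-- `r(t) = s(t) − (t^{p+1}−1)/(p+1)`. -/
def rF (c : ℝ → ℝ) (p t : ℝ) : ℝ := sF c t - (t ^ (p + 1) - 1) / (p + 1)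

/-- Hypothesis on `L₀`: `L₀ > 1` and `|r(L)|/L^{p+1} < 1/(4(p+1))` for `L > L₀`. -/
def CondL0 (c : ℝ → ℝ) (p L₀ : ℝ) : Prop :=
  1 < L₀ ∧ ∀ L : ℝ, L₀ < L → |rF c p L| / L ^ (p + 1) < 1 / (4 * (p + 1))

/-- `L₁ = max {L₀, 3^{1/(p+1)}}`. -/
def Lone (p L₀ : ℝ) : ℝ := max L₀ ((3:ℝ) ^ ((1:ℝ) / (p + 1)))

/-- `s_n(t) = (s(Lⁿt) − s(Lⁿ))/L^{n(p+1)}`. -/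
def sn (c : ℝ → ℝ) (p L : ℝ) (n : ℕ) (t : ℝ) : ℝ :=
  (sF c (L ^ n * t) - sF c (L ^ n)) / L ^ ((n : ℝ) * (p + 1))

/-- `u_f(x,t) = ∫ G(x−y, s_n(t)) f(y) dy`. -/
def linSol (G : ℝ → ℝ → ℝ) (c : ℝ → ℝ) (p L : ℝ) (n : ℕ) (f : ℝ → ℝ)
    (x t : ℝ) : ℝ :=
  ∫ y : ℝ, G (x - y) (sn c p L n t) * f y

/-- The linear RG operator `(R⁰_{L,n}f)(x) = L^{2(p+1)/d} u_f(L^{(p+1)/d}x, L)`. -/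
def RG0 (G : ℝ → ℝ → ℝ) (c : ℝ → ℝ) (p d L : ℝ) (n : ℕ) (f : ℝ → ℝ) :
    ℝ → ℝ := fun x =>
  L ^ (2 * (p + 1) / d) * linSol G c p L n f (L ^ ((p + 1) / d) * x) L

/-- `R⁰_{Lⁿ} = R⁰_{L,n−1} ∘ ⋯ ∘ R⁰_{L,0}`. -/
def RG0iter (G : ℝ → ℝ → ℝ) (c : ℝ → ℝ) (p d L : ℝ) :
    ℕ → (ℝ → ℝ) → ℝ → ℝ
  | 0 => fun f => f
  | n + 1 => fun f => RG0 G c p d L n (RG0iter G c p d L n f)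

/-- `G_p(x) = ∂ₓ G(x, 1/(p+1))`. -/
def Gp (G : ℝ → ℝ → ℝ) (p : ℝ) : ℝ → ℝ :=
  fun x => deriv (fun y => G y (1 / (p + 1))) x

/-- The nonlinearity `F(u,u_x)(y,τ) = Σ_j a_j u(y,τ)^j ∂ₓu(y,τ)`. -/
def Fnl (a : ℕ → ℝ) (u : ℝ → ℝ → ℝ) (y τ : ℝ) : ℝ :=
  ∑' j : ℕ, a j * u y τ ^ j * deriv (fun z => u z τ) y

/-- The coefficients define a series analytic at the origin with positive
radius of convergence. -/
def AnalyticCoeffs (a : ℕ → ℝ) : Prop :=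
  ∃ ρ : ℝ, 0 < ρ ∧ ∀ z : ℝ, |z| < ρ → Summable fun j : ℕ => |a j| * |z| ^ j

/-- `u` solves the nonlinear integral equation for all `t > 1`. -/
def SolvesNL (G : ℝ → ℝ → ℝ) (c : ℝ → ℝ) (lam : ℝ) (a : ℕ → ℝ)
    (f : ℝ → ℝ) (u : ℝ → ℝ → ℝ) : Prop :=
  ∀ x : ℝ, ∀ t : ℝ, 1 < t → u x t =
    (∫ y : ℝ, G (x - y) (sF c t) * f y) +
      lam * ∫ τ in (1:ℝ)..t, ∫ y : ℝ,
        G (x - y) (sF c t - sF c τ) * Fnl a u y τ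

/-- The norm `‖u‖_L = sup_{t∈[1,L]} ‖u(·,t)‖` on `B^{(L)}`. -/
def normL (q L : ℝ) (u : ℝ → ℝ → ℝ) : ℝ :=
  ⨆ t : Set.Icc (1:ℝ) L, bqNormR q fun x => u x (t : ℝ)

/-- `d_F = (2α+3)(p+1) − 2(p+1) − d`. -/
def dF (p d : ℝ) (α : ℕ) : ℝ := (2 * (α : ℝ) + 3) * (p + 1) - 2 * (p + 1) - d

/-- The generalized coupling constant `λ_n = L^{-(n/d)[(2α+3)(p+1)−2(p+1)−d]} λ`. -/
def lamn (lam p d L : ℝ) (α n : ℕ) : ℝ :=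
  L ^ (-((n : ℝ) / d) * dF p d α) * lam

/-- The renormalized nonlinearity `F_{L,n}`. -/
def FnlRen (a : ℕ → ℝ) (p d L : ℝ) (α n : ℕ) (u : ℝ → ℝ → ℝ)
    (y τ : ℝ) : ℝ :=
  ∑' j : ℕ, a j * L ^ (2 * (n : ℝ) / d * (p + 1) * ((α : ℝ) - (j : ℝ))) *
    u y τ ^ j * deriv (fun z => u z τ) y

/-- The rescaled solution `u_n(x,t) = L^{2n(p+1)/d} u(L^{n(p+1)/d}x, Lⁿt)`. -/
def resc (u : ℝ → ℝ → ℝ) (p d L : ℝ) (n : ℕ) (x t : ℝ) : ℝ :=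
  L ^ (2 * (n : ℝ) * (p + 1) / d) *
    u (L ^ ((n : ℝ) * (p + 1) / d) * x) (L ^ n * t)

/-- `u` solves the `n`-th renormalized integral equation on `[1,L]` with data `f`. -/
def SolvesRen (G : ℝ → ℝ → ℝ) (c : ℝ → ℝ) (lam p d L : ℝ) (a : ℕ → ℝ)
    (α n : ℕ) (f : ℝ → ℝ) (u : ℝ → ℝ → ℝ) : Prop :=
  ∀ x : ℝ, ∀ t ∈ Set.Icc (1:ℝ) L, u x t =
    (∫ y : ℝ, G (x - y) (sn c p L n t) * f y) +
      lamn lam p d L α n * ∫ τ in (1:ℝ)..t, ∫ y : ℝ,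
        G (x - y) (sn c p L n t - sn c p L n τ) * FnlRen a p d L α n u y τ

end
open scoped FourierTransform Convolution

lemma FT_eq_fourier (f : ℝ → ℂ) (ω : ℝ) : FT f ω = 𝓕 f ((2 * Real.pi)⁻¹ * ω) := by
  rw [Real.fourier_real_eq_integral_exp_smul]
  unfold FT
  congr 1
  ext x
  rw [smul_eq_mul]
  congr 2
  have : (Real.pi : ℂ) ≠ 0 := by exact_mod_cast Real.pi_ne_zero
  push_cast
  field_simp

lemma FT_scale (f : ℝ → ℂ) (a : ℝ) (ha : 0 < a) (ω : ℝ) :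
    FT (fun x => f (a * x)) ω = (a : ℂ)⁻¹ * FT f (ω / a) := by
  have h := MeasureTheory.Measure.integral_comp_mul_left
    (fun x : ℝ => Complex.exp (-(Complex.I * ((ω / a : ℝ) : ℂ) * (x : ℂ))) * f x) a
  unfold FT
  rw [abs_of_pos (inv_pos.2 ha), Complex.real_smul, Complex.ofReal_inv] at h
  rw [← h]
  congr 1
  ext x
  congr 2
  have : (a : ℂ) ≠ 0 := by exact_mod_cast ha.ne'
  push_cast
  field_simp

lemma FT_const_mul (f : ℝ → ℂ) (a : ℂ) (ω : ℝ) :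
    FT (fun x => a * f x) ω = a * FT f ω := by
  unfold FT
  rw [← integral_const_mul]
  congr 1
  ext x
  ring

lemma FT_conv (k f : ℝ → ℂ) (hk : Integrable k) (hf : Integrable f) (ω : ℝ) :
    FT (fun x => ∫ y, k (x - y) * f y) ω = FT k ω * FT f ω := by
  have h := Real.fourier_mul_convolution_eq hf hk ((2 * Real.pi)⁻¹ * ω)
  rw [FT_eq_fourier, FT_eq_fourier, FT_eq_fourier, mul_comm (𝓕 k _), ← h]
  have e : (fun x => ∫ y, k (x - y) * f y) = f ⋆[ContinuousLinearMap.mul ℂ ℂ, volume] k := by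
    ext x
    simp [convolution, mul_comm]
  rw [e]

lemma kappa_bounds (c : ℝ → ℝ) (p L₀ L : ℝ) (hp : 0 < p) (hL₀ : CondL0 c p L₀)
    (hL : Lone p L₀ < L) (n : ℕ) :
    1 / (3 * (p + 1)) ≤ sn c p L n L / L ^ (p + 1) ∧
      sn c p L n L / L ^ (p + 1) ≤ 2 / (p + 1) := by
  obtain ⟨h1, h2⟩ := hL₀
  have hLL : L₀ < L := lt_of_le_of_lt (le_max_left _ _) hL
  have hL1 : 1 < L := h1.trans hLL
  have hL0 : 0 < L := by linarith
  have h3 : 3 < L ^ (p + 1) := by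
    have : (3:ℝ) ^ ((1:ℝ) / (p + 1)) < L := lt_of_le_of_lt (le_max_right _ _) hL
    have h := Real.rpow_lt_rpow (by positivity) this (show 0 < p + 1 by linarith)
    rwa [← Real.rpow_mul (by norm_num), one_div, inv_mul_cancel₀ (by linarith),
      Real.rpow_one] at h
  set A := L ^ (p + 1) with hA
  have hpow : ∀ m : ℕ, (L ^ m) ^ (p + 1) = A ^ m := by
    intro m
    rw [hA, ← Real.rpow_natCast, ← Real.rpow_natCast, ← Real.rpow_mul hL0.le,
      ← Real.rpow_mul hL0.le, mul_comm]
  have hr : ∀ m : ℕ, |rF c p (L ^ m)| ≤ A ^ m * (1 / (4 * (p + 1))) := by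
    intro m
    rcases Nat.eq_zero_or_pos m with rfl | hm
    · simp [rF, sF]; positivity
    · have : L ≤ L ^ m := le_self_pow₀ hL1.le (by omega)
      have h := h2 (L ^ m) (by linarith)
      rw [hpow, div_lt_iff₀ (by positivity)] at h
      linarith
  have hs : ∀ m : ℕ, sF c (L ^ m) = (A ^ m - 1) / (p + 1) + rF c p (L ^ m) := by
    intro m; rw [rF, hpow]; ring
  have e : sn c p L n L / A = ((A ^ (n+1) - A ^ n) / (p + 1) + rF c p (L ^ (n+1)) - rF c p (L ^ n)) / A ^ (n+1) := by
    have h4 : L ^ ((n : ℝ) * (p + 1)) = A ^ n := by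
      rw [hA, ← Real.rpow_natCast, ← Real.rpow_mul hL0.le, mul_comm]
    rw [sn, h4, ← pow_succ, hs, hs, div_div, ← pow_succ]
    congr 1
    ring
  have a1 := abs_le.1 (hr (n+1))
  have a2 := abs_le.1 (hr n)
  have hAn : 0 < A ^ n := by positivity
  have hu : 0 < 1 / (p + 1) := by positivity
  have e4 : 1 / (4 * (p + 1)) = (1 / (p + 1)) / 4 := by field_simp
  have e3 : 1 / (3 * (p + 1)) = (1 / (p + 1)) / 3 := by field_simp
  have e2 : 2 / (p + 1) = 2 * (1 / (p + 1)) := by field_simp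
  rw [e, e3, e2, le_div_iff₀ (by positivity), div_le_iff₀ (by positivity)]
  rw [e4] at a1 a2
  rw [div_eq_mul_one_div (A ^ (n+1) - A ^ n)]
  set u := 1 / (p + 1)
  rw [pow_succ] at *
  have key : 3 * (A ^ n * u) ≤ A ^ n * A * u := by
    have := mul_le_mul_of_nonneg_left h3.le (show 0 ≤ A ^ n * u by positivity)
    linarith
  have k0 : 0 < A ^ n * u := by positivity
  constructor <;> nlinarith

lemma G_int (f : ℝ → ℝ) (N M : ℕ) (hM : 0 < M) (hf : ContDiff ℝ N f)
    (hB : ∀ j ≤ N, ∃ B : ℝ, ∀ x : ℝ, (1 + |x| + x ^ 2) * (1 + |x|) ^ (M + 1) *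
        |iteratedDeriv j f x| ≤ B) (k j : ℕ) (hk : k ≤ 2) (hj : j ≤ N) :
    Integrable (fun x : ℝ => ‖x‖ ^ k * ‖iteratedFDeriv ℝ j (fun x => (f x : ℂ)) x‖) := by
  obtain ⟨B, hB⟩ := hB j hj
  have e : ∀ x, ‖iteratedFDeriv ℝ j (fun x => (f x : ℂ)) x‖ = |iteratedDeriv j f x| := by
    intro x
    have := Complex.ofRealLI.norm_iteratedFDeriv_comp_left (f := f) (x := x) (i := j)
      (hf.contDiffAt) (by exact_mod_cast hj)
    rw [← Real.norm_eq_abs, ← norm_iteratedFDeriv_eq_norm_iteratedDeriv, ← this]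
    rfl
  have hc : Continuous (fun x => iteratedDeriv j f x) :=
    hf.continuous_iteratedDeriv j (by exact_mod_cast hj)
  simp only [e]
  refine (integrable_inv_one_add_sq.const_mul B).mono' (by fun_prop) ?_
  filter_upwards with x
  rw [Real.norm_eq_abs, abs_of_nonneg (by positivity), ← div_eq_mul_inv, le_div_iff₀ (by positivity)]
  refine le_trans ?_ (hB x)
  have h1 : ‖x‖ ^ k ≤ 1 + |x| + x ^ 2 := by
    rw [Real.norm_eq_abs]
    interval_cases k
    · rw [pow_zero]; nlinarith [sq_nonneg x, abs_nonneg x]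
    · rw [pow_one]; nlinarith [sq_nonneg x]
    · rw [sq_abs]; linarith [abs_nonneg x]
  have h2 : 1 + x ^ 2 ≤ (1 + |x|) ^ (M + 1) := by
    calc 1 + x ^ 2 ≤ (1 + |x|) ^ 2 := by nlinarith [sq_abs x, abs_nonneg x]
      _ ≤ _ := pow_le_pow_right₀ (by linarith [abs_nonneg x]) (by omega)
  calc ‖x‖ ^ k * |iteratedDeriv j f x| * (1 + x ^ 2) = ‖x‖ ^ k * (1 + x ^ 2) * |iteratedDeriv j f x| := by ring
    _ ≤ _ := by gcongr

lemma phi_bound (f : ℝ → ℝ) (N M : ℕ) (hM : 0 < M) (hf : ContDiff ℝ N f)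
    (hB : ∀ j ≤ N, ∃ B : ℝ, ∀ x : ℝ, (1 + |x| + x ^ 2) * (1 + |x|) ^ (M + 1) *
        |iteratedDeriv j f x| ≤ B) :
    Integrable (fun x => (f x : ℂ)) ∧ ContDiff ℝ 2 (FT (fun x => (f x : ℂ))) ∧
    ∃ K : ℝ, 0 ≤ K ∧ ∀ k ≤ 2, ∀ ω : ℝ,
      (1 + |ω| ^ N) * ‖iteratedDeriv k (FT (fun x => (f x : ℂ))) ω‖ ≤ K := by
  set F : ℝ → ℂ := fun x => (f x : ℂ) with hF
  have hIntG := G_int f N M hM hf hB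
  have hFc : ContDiff ℝ N F := Complex.ofRealCLM.contDiff.comp hf
  have hFT : FT F = fun ω => 𝓕 F ((2 * Real.pi)⁻¹ * ω) := funext (FT_eq_fourier F)
  have hC : ContDiff ℝ 2 (𝓕 F) := by
    refine Real.contDiff_fourier (N := 2) (f := F) ?_
    intro n hn
    have := hIntG n 0 (by exact_mod_cast hn) (Nat.zero_le _)
    simpa [hF] using this
  refine ⟨?_, ?_, ?_⟩
  · have := hIntG 0 0 (by norm_num) (Nat.zero_le _)
    refine (integrable_norm_iff hFc.continuous.aestronglyMeasurable).1 ?_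
    simpa [hF] using this
  · rw [hFT]
    exact hC.comp (contDiff_const.mul contDiff_id)
  · have hb : ∀ k ≤ 2, ∀ n ≤ N, ∃ K : ℝ, ∀ w : ℝ, |w| ^ n * ‖iteratedDeriv k (𝓕 F) w‖ ≤ K := by
      intro k hk n hn
      refine ⟨(2 * Real.pi) ^ k * (2 * k + 2) ^ n *
        ∑ p ∈ Finset.range (k + 1) ×ˢ Finset.range (n + 1),
          ∫ v, ‖v‖ ^ p.1 * ‖iteratedFDeriv ℝ p.2 F v‖, fun w => ?_⟩
      have := Real.pow_mul_norm_iteratedFDeriv_fourier_le (K := 2) (N := (N : ℕ∞)) (f := F)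
        (by exact_mod_cast hFc) (fun k j hk hj => hIntG k j (by exact_mod_cast hk) (by exact_mod_cast hj))
        (k := k) (n := n) (by exact_mod_cast hk) (by exact_mod_cast hn) w
      rw [norm_iteratedFDeriv_eq_norm_iteratedDeriv, Real.norm_eq_abs] at this
      exact this
    have hb2 : ∀ k ≤ 2, ∃ K : ℝ, ∀ ω : ℝ, (1 + |ω| ^ N) * ‖iteratedDeriv k (FT F) ω‖ ≤ K := by
      intro k hk
      obtain ⟨K0, h0⟩ := hb k hk 0 (Nat.zero_le _)
      obtain ⟨K1, h1⟩ := hb k hk N le_rfl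
      refine ⟨((2 * Real.pi)⁻¹) ^ k * (K0 + (2 * Real.pi) ^ N * K1), fun ω => ?_⟩
      have h := iteratedDeriv_comp_const_smul (n := k) (f := 𝓕 F)
        (hC.of_le (by exact_mod_cast hk)) ((2 * Real.pi)⁻¹)
      rw [hFT, h, norm_smul, norm_pow, Real.norm_eq_abs,
        abs_of_pos (show 0 < (2 * Real.pi)⁻¹ by positivity)]
      have g0 := h0 ((2 * Real.pi)⁻¹ * ω)
      have g1 := h1 ((2 * Real.pi)⁻¹ * ω)
      set X := ‖iteratedDeriv k (𝓕 F) ((2 * Real.pi)⁻¹ * ω)‖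
      have : |ω| ^ N = (2 * Real.pi) ^ N * |(2 * Real.pi)⁻¹ * ω| ^ N := by
        rw [← mul_pow, abs_mul, abs_of_pos (show 0 < (2 * Real.pi)⁻¹ by positivity), ← mul_assoc,
          mul_inv_cancel₀ (by positivity), one_mul]
      rw [this]
      have g2 := mul_le_mul_of_nonneg_left g1 (show 0 ≤ (2 * Real.pi) ^ N by positivity)
      calc _ = ((2 * Real.pi)⁻¹) ^ k * (|(2 * Real.pi)⁻¹ * ω| ^ 0 * X + (2 * Real.pi) ^ N * (|(2 * Real.pi)⁻¹ * ω| ^ N * X)) := by ring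
        _ ≤ _ := by gcongr
    obtain ⟨K0, h0⟩ := hb2 0 (by norm_num)
    obtain ⟨K1, h1⟩ := hb2 1 (by norm_num)
    obtain ⟨K2, h2⟩ := hb2 2 (by norm_num)
    refine ⟨max 0 (max K0 (max K1 K2)), le_max_left _ _, ?_⟩
    intro k hk ω
    interval_cases k
    · exact (h0 ω).trans (by simp)
    · exact (h1 ω).trans (by simp)
    · exact (h2 ω).trans (by simp)

lemma RG_FT (G : ℝ → ℝ → ℝ) (d : ℝ) (c : ℝ → ℝ) (p L : ℝ) (n : ℕ) (hd : 0 < d)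
    (hL : 0 < L) (hs : 0 < sn c p L n L) (hG2 : CondG2 G d)
    (hGi : Integrable (fun x => ((G x 1 : ℝ) : ℂ))) (g : ℝ → ℝ)
    (hg : Integrable (fun x => (g x : ℂ))) (ω : ℝ) :
    FT (fun x => ((RG0 G c p d L n g x : ℝ) : ℂ)) ω =
      ((L ^ ((p + 1) / d) : ℝ) : ℂ) *
        FT (fun x => ((G x 1 : ℝ) : ℂ)) ((sn c p L n L / L ^ (p + 1)) ^ (1 / d) * ω) *
        FT (fun x => (g x : ℂ)) ((L ^ ((p + 1) / d))⁻¹ * ω) := by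
  set s := sn c p L n L with hsdef
  set lam := L ^ ((p + 1) / d) with hlam
  have hlam0 : 0 < lam := by positivity
  set a := s ^ (-(1 : ℝ) / d) with ha
  have ha0 : 0 < a := by positivity
  have hGs : ∀ x, G x s = a * G (a * x) 1 := fun x => hG2 x s hs
  have e1 : (fun x => ((RG0 G c p d L n g x : ℝ) : ℂ)) = fun x =>
      ((lam ^ 2 : ℝ) : ℂ) * (fun z : ℝ => ∫ y, ((G (z - y) s : ℝ) : ℂ) * (g y : ℂ)) (lam * x) := by
    ext x
    have h2 : L ^ (2 * (p + 1) / d) = lam ^ 2 := by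
      rw [hlam, ← Real.rpow_natCast, ← Real.rpow_mul hL.le]
      congr 1
      push_cast
      ring
    simp only [RG0, linSol, ← hsdef, ← hlam, h2]
    push_cast
    rw [← integral_complex_ofReal]
    simp
  have hki : Integrable (fun x => ((G x s : ℝ) : ℂ)) := by
    simp only [hGs]
    push_cast
    exact (hGi.comp_mul_left' ha0.ne').const_mul _
  have e2 : ∀ w, FT (fun x => ((G x s : ℝ) : ℂ)) w = FT (fun x => ((G x 1 : ℝ) : ℂ)) (w / a) := by
    intro w
    simp only [hGs]
    push_cast
    rw [FT_const_mul (fun x => ((G (a * x) 1 : ℝ) : ℂ)), FT_scale (fun x => ((G x 1 : ℝ) : ℂ)) a ha0,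
      ← mul_assoc, mul_inv_cancel₀ (by exact_mod_cast ha0.ne'), one_mul]
  have e3 : (s / L ^ (p + 1)) ^ (1 / d) * ω = ω / lam / a := by
    have : (s / L ^ (p + 1)) ^ (1 / d) = a⁻¹ / lam := by
      rw [Real.div_rpow hs.le (by positivity), ← Real.rpow_mul hL.le, ha, ← Real.rpow_neg hs.le, hlam]
      congr 2 <;> ring
    rw [this]
    field_simp
  rw [e1, FT_const_mul, FT_scale (fun z : ℝ => ∫ y, ((G (z - y) s : ℝ) : ℂ) * (g y : ℂ)) lam hlam0, FT_conv _ _ hki hg, e2, e3, ← div_eq_inv_mul]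
  have : (lam : ℂ) ≠ 0 := by exact_mod_cast hlam0.ne'
  push_cast
  field_simp

lemma mv_bounds (ψ : ℝ → ℂ) (hψ : ContDiff ℝ 2 ψ) (N : ℝ)
    (hN : ∀ x, ‖deriv (deriv ψ) x‖ ≤ N) (h0 : ψ 0 = 0) (h1 : deriv ψ 0 = 0) :
    (∀ x, ‖deriv ψ x‖ ≤ N * |x|) ∧ ∀ x, ‖ψ x‖ ≤ N * |x| ^ 2 := by
  have hd1 : Differentiable ℝ ψ := hψ.differentiable (by norm_num)
  have hd2 : Differentiable ℝ (deriv ψ) := by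
    have : ContDiff ℝ 1 (deriv ψ) := ((contDiff_succ_iff_deriv (n := 1)).1 (by simpa [one_add_one_eq_two] using hψ)).2.2
    exact this.differentiable (by norm_num)
  have hN0 : 0 ≤ N := (norm_nonneg _).trans (hN 0)
  have A : ∀ x, ‖deriv ψ x‖ ≤ N * |x| := by
    intro x
    have := convex_univ.norm_image_sub_le_of_norm_deriv_le (f := deriv ψ) (C := N)
      (fun y _ => hd2 y) (fun y _ => hN y) (Set.mem_univ 0) (Set.mem_univ x)
    simpa [h1] using this
  refine ⟨A, fun x => ?_⟩
  have := (convex_Icc (-|x|) |x|).norm_image_sub_le_of_norm_deriv_le (f := ψ) (C := N * |x|)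
      (x := 0) (y := x)
      (fun y _ => hd1 y) (fun y hy => (A y).trans (mul_le_mul_of_nonneg_left (abs_le.2 hy) hN0)) ⟨by simp, abs_nonneg x⟩
      (abs_le.1 le_rfl)
  simp only [h0, sub_zero, Real.norm_eq_abs] at this
  linarith [this, sq (|x|)]

lemma pow_aux (q : ℕ) (x a κ : ℝ) (hx : 0 ≤ x) (ha : 0 < a) (hκ : a ≤ κ) :
    (1 + x ^ q) * (1 + x + x ^ 2) ≤ 6 * (1 + (a⁻¹) ^ (q + 2)) * (1 + (κ * x) ^ (q + 2)) := by
  have hk : ∀ k ≤ q + 2, x ^ k ≤ 1 + x ^ (q + 2) := by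
    intro k hk
    rcases le_total x 1 with h | h
    · linarith [pow_le_one₀ (n := k) hx h, pow_nonneg hx (q + 2)]
    · linarith [pow_le_pow_right₀ h hk]
  have e : (1 + x ^ q) * (1 + x + x ^ 2) = x ^ 0 + x ^ 1 + x ^ 2 + x ^ q + x ^ (q + 1) + x ^ (q + 2) := by
    ring
  have h1 : (1 + x ^ q) * (1 + x + x ^ 2) ≤ 6 * (1 + x ^ (q + 2)) := by
    rw [e]
    linarith [hk 0 (by omega), hk 1 (by omega), hk 2 (by omega), hk q (by omega), hk (q+1) (by omega),
      hk (q+2) (by omega)]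
  have h2 : x ^ (q + 2) ≤ (a⁻¹) ^ (q + 2) * (κ * x) ^ (q + 2) := by
    rw [← mul_pow]
    gcongr
    rw [← mul_assoc]
    have : 1 ≤ a⁻¹ * κ := by rw [← div_eq_inv_mul, le_div_iff₀ ha]; linarith
    nlinarith
  have h3 : 0 ≤ (κ * x) ^ (q + 2) := pow_nonneg (mul_nonneg (ha.le.trans hκ) hx) _
  have h4 : 0 ≤ (a⁻¹) ^ (q + 2) := by positivity
  nlinarith

lemma deriv_bounds (φ ψ : ℝ → ℂ) (hφ : ContDiff ℝ 2 φ) (hψ : ContDiff ℝ 2 ψ) (q : ℕ)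
    (K N a b κ lam : ℝ) (ha : 0 < a) (hκa : a ≤ κ) (hκb : κ ≤ b) (hlam : 0 < lam)
    (hK0 : 0 ≤ K)
    (hK : ∀ k ≤ 2, ∀ ω : ℝ, (1 + |ω| ^ (q + 2)) * ‖iteratedDeriv k φ ω‖ ≤ K)
    (hN : ∀ x, ‖deriv (deriv ψ) x‖ ≤ N) (h0 : ψ 0 = 0) (h1 : deriv ψ 0 = 0) (h : ℝ → ℂ)
    (hh : ∀ ω, h ω = (lam : ℂ) * φ (κ * ω) * ψ (lam⁻¹ * ω)) (ω : ℝ) :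
    (1 + |ω| ^ q) * (‖h ω‖ + ‖deriv h ω‖ + ‖deriv (deriv h) ω‖) ≤
      (6 * (1 + (a⁻¹) ^ (q + 2)) * K * (1 + b) ^ 2) / lam * N := by
  obtain ⟨m1, m0⟩ := mv_bounds ψ hψ N hN h0 h1
  have hN0 : 0 ≤ N := (norm_nonneg _).trans (hN 0)
  have hκ : 0 < κ := ha.trans_le hκa
  have dφ : ∀ (φ : ℝ → ℂ), ContDiff ℝ 2 φ → (∀ x, HasDerivAt φ (deriv φ x) x) ∧
      ∀ x, HasDerivAt (deriv φ) (deriv (deriv φ) x) x := by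
    intro φ hφ
    have : ContDiff ℝ 1 (deriv φ) := ((contDiff_succ_iff_deriv (n := 1)).1 (by simpa [one_add_one_eq_two] using hφ)).2.2
    exact ⟨fun x => (hφ.differentiable (by norm_num) x).hasDerivAt,
      fun x => (this.differentiable (by norm_num) x).hasDerivAt⟩
  have sc : ∀ (f f' : ℝ → ℂ) (r : ℝ), (∀ x, HasDerivAt f (f' x) x) → ∀ x,
      HasDerivAt (fun x => f (r * x)) ((r : ℂ) * f' (r * x)) x := by
    intro f f' r hf x
    have := (hf (r * x)).scomp x ((hasDerivAt_id x).const_mul r)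
    simpa [Complex.real_smul, Function.comp_def] using this
  obtain ⟨p1, p2⟩ := dφ φ hφ
  obtain ⟨s1, s2⟩ := dφ ψ hψ
  have P1 := sc _ _ κ p1
  have P2 := sc _ _ κ p2
  have S1 := sc _ _ lam⁻¹ s1
  have S2 := sc _ _ lam⁻¹ s2
  have hlc : (lam : ℂ) ≠ 0 := by exact_mod_cast hlam.ne'
  have hfun : h = fun ω => (lam : ℂ) * φ (κ * ω) * ψ (lam⁻¹ * ω) := funext hh
  have D1 : deriv h = fun ω => (lam : ℂ) * κ * deriv φ (κ * ω) * ψ (lam⁻¹ * ω) +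
      φ (κ * ω) * deriv ψ (lam⁻¹ * ω) := by
    ext x
    rw [hfun]
    refine ((((P1 x).const_mul (lam : ℂ)).mul (S1 x)).congr_deriv ?_).deriv
    push_cast
    field_simp
  have D2 : deriv (deriv h) = fun ω => (lam : ℂ) * κ ^ 2 * deriv (deriv φ) (κ * ω) * ψ (lam⁻¹ * ω) +
      2 * κ * deriv φ (κ * ω) * deriv ψ (lam⁻¹ * ω) +
      (lam : ℂ)⁻¹ * φ (κ * ω) * deriv (deriv ψ) (lam⁻¹ * ω) := by
    ext x
    rw [D1]
    refine (((((P2 x).const_mul ((lam : ℂ) * κ)).mul (S1 x)).add ((P1 x).mul (S2 x))).congr_deriv ?_).deriv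
    push_cast
    field_simp
    ring
  set x := |ω| with hx
  have hx0 : 0 ≤ x := abs_nonneg _
  set W := 1 + (κ * x) ^ (q + 2) with hW
  have hW0 : 0 < W := by positivity
  have hP : ∀ k ≤ 2, ‖iteratedDeriv k φ (κ * ω)‖ ≤ K / W := by
    intro k hk
    have := hK k hk (κ * ω)
    rw [abs_mul, abs_of_pos hκ] at this
    rw [le_div_iff₀ hW0]
    linarith
  have q0 := hP 0 (by norm_num)
  have q1 := hP 1 (by norm_num)
  have q2 := hP 2 (by norm_num)
  rw [iteratedDeriv_zero] at q0
  rw [iteratedDeriv_one] at q1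
  rw [iteratedDeriv_succ, iteratedDeriv_one] at q2
  set P := K / W
  have hP0 : 0 ≤ P := by positivity
  have t0 : ‖ψ (lam⁻¹ * ω)‖ ≤ N * x ^ 2 / lam ^ 2 := by
    refine (m0 _).trans (le_of_eq ?_)
    rw [abs_mul, abs_of_pos (inv_pos.2 hlam), ← hx]; field_simp
  have t1 : ‖deriv ψ (lam⁻¹ * ω)‖ ≤ N * x / lam := by
    refine (m1 _).trans (le_of_eq ?_)
    rw [abs_mul, abs_of_pos (inv_pos.2 hlam), ← hx]; field_simp
  have t2 := hN (lam⁻¹ * ω)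
  have nl : ‖(lam : ℂ)‖ = lam := by simp [abs_of_pos hlam]
  have nk : ‖(κ : ℂ)‖ = κ := by simp [abs_of_pos hκ]
  have B0 : ‖h ω‖ ≤ N / lam * P * x ^ 2 := by
    rw [hh, norm_mul, norm_mul, nl]
    calc _ ≤ lam * P * (N * x ^ 2 / lam ^ 2) := by gcongr
      _ = _ := by field_simp
  have B1 : ‖deriv h ω‖ ≤ N / lam * P * (κ * x ^ 2 + x) := by
    rw [D1]
    refine (norm_add_le _ _).trans ?_
    simp only [norm_mul, nl, nk]
    calc _ ≤ lam * κ * P * (N * x ^ 2 / lam ^ 2) + P * (N * x / lam) := by gcongr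
      _ = _ := by field_simp
  have B2 : ‖deriv (deriv h) ω‖ ≤ N / lam * P * (κ ^ 2 * x ^ 2 + 2 * κ * x + 1) := by
    rw [D2]
    refine (norm_add₃_le).trans ?_
    simp only [norm_mul, norm_pow, norm_inv, nl, nk, Complex.norm_ofNat]
    calc _ ≤ lam * κ ^ 2 * P * (N * x ^ 2 / lam ^ 2) + 2 * κ * P * (N * x / lam) + lam⁻¹ * P * N := by gcongr
      _ = _ := by field_simp
  have hpa := pow_aux q x a κ hx0 ha hκa
  have hsum : ‖h ω‖ + ‖deriv h ω‖ + ‖deriv (deriv h) ω‖ ≤ N / lam * P * ((1 + x + x ^ 2) * (1 + b) ^ 2) := by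
    have h1 : x ^ 2 + (κ * x ^ 2 + x) + (κ ^ 2 * x ^ 2 + 2 * κ * x + 1) ≤ (1 + x + x ^ 2) * (1 + κ) ^ 2 := by
      have : 0 ≤ κ * x ^ 2 + κ ^ 2 * x + 2 * κ + κ ^ 2 := by positivity
      nlinarith
    have h2 : (1 + x + x ^ 2) * (1 + κ) ^ 2 ≤ (1 + x + x ^ 2) * (1 + b) ^ 2 := by gcongr
    have := mul_le_mul_of_nonneg_left (h1.trans h2) (show 0 ≤ N / lam * P by positivity)
    linarith
  calc _ ≤ (1 + x ^ q) * (N / lam * P * ((1 + x + x ^ 2) * (1 + b) ^ 2)) := by gcongr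
    _ = (N / lam * P * (1 + b) ^ 2) * ((1 + x ^ q) * (1 + x + x ^ 2)) := by ring
    _ ≤ (N / lam * P * (1 + b) ^ 2) * (6 * (1 + (a⁻¹) ^ (q + 2)) * W) := by gcongr
    _ = _ := by simp only [P]; field_simp

/-- Lemma 2.8, Contraction Lemma: the linear RG operator
contracts on functions with zero mass and zero first momentum. -/
theorem contraction_lemma
    (G : ℝ → ℝ → ℝ) (q : ℕ) (d : ℝ) (c : ℝ → ℝ) (p L₀ : ℝ)
    (hq : 1 < q) (hd : 0 < d) (hG : CondsG G q d) (hc : CondC c p)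
    (hL₀ : CondL0 c p L₀) :
    ∃ C : ℝ, 0 < C ∧ ∀ L : ℝ, Lone p L₀ < L → ∀ n : ℕ, ∀ g : ℝ → ℝ,
      MemBqR q g → FTr g 0 = 0 → deriv (FTr g) 0 = 0 →
        bqNormR q (RG0 G c p d L n g) ≤ C / L ^ ((p + 1) / d) * bqNormR q g := by
  obtain ⟨⟨M, hM, hGc, hGB⟩, hG2, -⟩ := hG
  obtain ⟨hp, -⟩ := hc
  obtain ⟨hGi, hφ, K, hK0, hK⟩ := phi_bound (fun x => G x 1) (q + 2) M hM hGc hGB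
  set a := (1 / (3 * (p + 1))) ^ (1 / d) with ha
  set b := (2 / (p + 1)) ^ (1 / d) with hb
  have ha0 : 0 < a := by positivity
  have hb0 : 0 < b := by positivity
  refine ⟨6 * (1 + (a⁻¹) ^ (q + 2)) * (K + 1) * (1 + b) ^ 2, by positivity, ?_⟩
  intro L hL n g hg hg0 hg1
  obtain ⟨hgi, hψ, hbdd⟩ := hg
  have hL0 : 0 < L := by
    have : L₀ < L := lt_of_le_of_lt (le_max_left _ _) hL
    linarith [hL₀.1]
  obtain ⟨k1, k2⟩ := kappa_bounds c p L₀ L hp hL₀ hL n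
  have hq0 : 0 < sn c p L n L / L ^ (p + 1) := lt_of_lt_of_le (by positivity) k1
  have hs : 0 < sn c p L n L := by
    have := mul_pos hq0 (show 0 < L ^ (p + 1) by positivity)
    rwa [div_mul_cancel₀ _ (by positivity)] at this
  have hN : ∀ x, ‖deriv (deriv (FT fun x => (g x : ℂ))) x‖ ≤ bqNormR q g := by
    intro x
    refine le_trans ?_ (le_ciSup hbdd x)
    unfold bqFun
    have h1 : 0 ≤ |x| ^ (q : ℝ) := by positivity
    have h2 := norm_nonneg (FT (fun x => (g x : ℂ)) x)
    have h3 := norm_nonneg (deriv (FT (fun x => (g x : ℂ))) x)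
    have h4 := norm_nonneg (deriv (deriv (FT (fun x => (g x : ℂ)))) x)
    nlinarith [mul_nonneg h1 (add_nonneg (add_nonneg h2 h3) h4)]
  refine ciSup_le fun ω => ?_
  unfold bqFun
  rw [Real.rpow_natCast]
  exact deriv_bounds _ _ hφ hψ q (K + 1) (bqNormR q g) a b
    ((sn c p L n L / L ^ (p + 1)) ^ (1 / d)) (L ^ ((p + 1) / d)) ha0
    (Real.rpow_le_rpow (by positivity) k1 (by positivity))
    (Real.rpow_le_rpow hq0.le k2 (by positivity)) (by positivity) (by linarith)
    (fun k hk w => (hK k hk w).trans (by linarith)) hN hg0 hg1 _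
    (RG_FT G d c p L n hd hL0 hs hG2 hGi g hgi) ω
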